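/- Let n ≥ 1, let v ∈ Λ̃ be a primitive element of the Mukai lattice with (v,v) = 2n + 2, let Λ = v^⊥ = {x ∈ Λ̃ : (x,v) = 0} with the restricted bilinear form, and let g : Λ → Λ be an isometry. Let g_ℚ denote the ℚ-linear extension of g to Λ ⊗ ℚ and let Λ^∨ = {x ∈ Λ ⊗ ℚ : (x,y) ∈ ℤ for all y ∈ Λ} be the dual lattice. Then g extends to an isometry g̃ of Λ̃ (meaning g̃(x) = g(x) for all x ∈ Λ) if and only if there exists ε ∈ {1,−1} such that g_ℚ(x) − ε·x ∈ Λ for all x ∈ Λ^∨, i.e. if and only if g acts as +1 or as −1 on the discriminant group Λ^∨/Λ. -/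

import Mathlib

/-- The Mukai form of the Mukai lattice `Λ̃ = U^{⊕4}`, as a bilinear form on `ℤ⁸`. -/
def mukaiForm (x y : Fin 8 → ℤ) : ℤ :=
  x 0 * y 1 + x 1 * y 0 + x 2 * y 3 + x 3 * y 2 + x 4 * y 5 + x 5 * y 4
    + x 6 * y 7 + x 7 * y 6

/-- The Mukai form extended to `ℚ⁸`. -/
def mukaiFormQ (x y : Fin 8 → ℚ) : ℚ :=
  x 0 * y 1 + x 1 * y 0 + x 2 * y 3 + x 3 * y 2 + x 4 * y 5 + x 5 * y 4
    + x 6 * y 7 + x 7 * y 6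

/-- An element of `ℤ^m` is primitive if the gcd of its coordinates is `1`. -/
def IsPrimitive {m : ℕ} (x : Fin m → ℤ) : Prop :=
  Finset.univ.gcd x = 1

/-- The orthogonal complement `v^⊥ = {x ∈ Λ̃ : (x,v) = 0}` as a `ℤ`-submodule. -/
def perpV (v : Fin 8 → ℤ) : Submodule ℤ (Fin 8 → ℤ) where
  carrier := {x | mukaiForm x v = 0}
  add_mem' := by
    intro a b ha hb
    simp only [Set.mem_setOf_eq, mukaiForm, Pi.add_apply] at *
    linear_combination ha + hb
  zero_mem' := by simp [mukaiForm]
  smul_mem' := by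
    intro c x hx
    simp only [Set.mem_setOf_eq, mukaiForm, Pi.smul_apply, smul_eq_mul] at *
    linear_combination c * hx

theorem mf_comm (x y : Fin 8 → ℤ) : mukaiForm x y = mukaiForm y x := by
  simp only [mukaiForm]; ring

theorem mf_add_left (x y z : Fin 8 → ℤ) :
    mukaiForm (x + y) z = mukaiForm x z + mukaiForm y z := by
  simp only [mukaiForm, Pi.add_apply]; ring

theorem mf_sub_left (x y z : Fin 8 → ℤ) :
    mukaiForm (x - y) z = mukaiForm x z - mukaiForm y z := by
  simp only [mukaiForm, Pi.sub_apply]; ring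

theorem mf_smul_left (c : ℤ) (x z : Fin 8 → ℤ) :
    mukaiForm (c • x) z = c * mukaiForm x z := by
  simp only [mukaiForm, Pi.smul_apply, smul_eq_mul]; ring

theorem mf_add_right (x y z : Fin 8 → ℤ) :
    mukaiForm z (x + y) = mukaiForm z x + mukaiForm z y := by
  simp only [mukaiForm, Pi.add_apply]; ring

theorem mf_sub_right (x y z : Fin 8 → ℤ) :
    mukaiForm z (x - y) = mukaiForm z x - mukaiForm z y := by
  simp only [mukaiForm, Pi.sub_apply]; ring

theorem mf_smul_right (c : ℤ) (x z : Fin 8 → ℤ) :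
    mukaiForm z (c • x) = c * mukaiForm z x := by
  simp only [mukaiForm, Pi.smul_apply, smul_eq_mul]; ring

theorem mem_perpV (v x : Fin 8 → ℤ) : x ∈ perpV v ↔ mukaiForm x v = 0 := Iff.rfl

theorem mf_swap (x : Fin 8 → ℤ) (i : Fin 8) :
    mukaiForm x (Pi.single (![1, 0, 3, 2, 5, 4, 7, 6] i) 1) = x i := by
  fin_cases i <;> simp [mukaiForm, Pi.single_apply]

theorem mfQ_swap (x : Fin 8 → ℚ) (i : Fin 8) :
    mukaiFormQ x (fun j => (((Pi.single (![1, 0, 3, 2, 5, 4, 7, 6] i) 1 : Fin 8 → ℤ) j : ℤ) : ℚ))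
      = x i := by
  fin_cases i <;> simp [mukaiFormQ, Pi.single_apply]

theorem mf_nondeg (x : Fin 8 → ℤ) (h : ∀ y, mukaiForm x y = 0) : x = 0 := by
  funext i
  rw [← mf_swap x i, h]; rfl

theorem exists_dual (v : Fin 8 → ℤ) (hv : IsPrimitive v) : ∃ w, mukaiForm w v = 1 := by
  obtain ⟨f, hf⟩ := Finset.gcd_eq_sum_mul Finset.univ v
  have h1 : Finset.univ.gcd v = 1 := hv
  rw [h1] at hf
  refine ⟨fun i => f (![1, 0, 3, 2, 5, 4, 7, 6] i), ?_⟩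
  rw [hf]
  simp [mukaiForm, Fin.sum_univ_eight]
  ring

theorem orth_perp (v w u : Fin 8 → ℤ) (hw : mukaiForm w v = 1)
    (h : ∀ x ∈ perpV v, mukaiForm u x = 0) : u = mukaiForm u w • v := by
  rw [← sub_eq_zero]
  apply mf_nondeg
  intro y
  have := h (y - mukaiForm y v • w) (by
    rw [mem_perpV, mf_sub_left, mf_smul_left, hw]; ring)
  rw [mf_sub_right, mf_smul_right] at this
  rw [mf_sub_left, mf_smul_left, mf_comm v y]
  linarith

theorem forward_dir (v w : Fin 8 → ℤ) (hw : mukaiForm w v = 1) (hd : mukaiForm v v ≠ 0)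
    (g : perpV v ≃ₗ[ℤ] perpV v)
    (gt : (Fin 8 → ℤ) ≃ₗ[ℤ] (Fin 8 → ℤ))
    (hgt : ∀ x y, mukaiForm (gt x) (gt y) = mukaiForm x y)
    (hext : ∀ x : perpV v, gt x.1 = (g x).1) :
    ∃ ε : ℤ, (ε = 1 ∨ ε = -1) ∧
        ∀ x : Fin 8 → ℚ,
          mukaiFormQ x (fun i => (v i : ℚ)) = 0 →
          (∀ y ∈ perpV v, ∃ m : ℤ, mukaiFormQ x (fun i => (y i : ℚ)) = (m : ℚ)) →
          ∀ (k : ℤ) (y : Fin 8 → ℤ) (hy : y ∈ perpV v),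
            (fun i => ((y i : ℚ))) = k • x →
            ∃ z ∈ perpV v, (g ⟨y, hy⟩).1 - ε • y = k • z := by
  have hv := orth_perp v w (gt v) hw (by
    intro x hx
    have h1 : gt (g.symm ⟨x, hx⟩).1 = x := by rw [hext]; simp
    rw [← h1, hgt, mf_comm]
    exact (g.symm ⟨x, hx⟩).2)
  generalize mukaiForm (gt v) w = ε at hv
  have hε : ε * ε = 1 := by
    have h := hgt v v
    rw [hv, mf_smul_left, mf_smul_right] at h
    apply mul_right_cancel₀ hd
    linarith
  refine ⟨ε, mul_self_eq_one_iff.mp hε, ?_⟩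
  intro x hxv hx k y hy hk
  have hyk : ∀ i, (y i : ℚ) = k * x i := fun i => by simpa using congrFun hk i
  have key : ∀ i, ∃ m : ℤ, y i - mukaiForm y w * v i = k * m := by
    intro i
    set e : Fin 8 → ℤ := Pi.single (![1, 0, 3, 2, 5, 4, 7, 6] i) 1 with he
    have hey : mukaiForm y e = y i := mf_swap y i
    have hev : mukaiForm v e = v i := mf_swap v i
    have hp : e - mukaiForm e v • w ∈ perpV v := by
      rw [mem_perpV, mf_sub_left, mf_smul_left, hw]; ring
    obtain ⟨m, hm⟩ := hx _ hp
    refine ⟨m, ?_⟩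
    have h2 : ((mukaiForm y (e - mukaiForm e v • w) : ℤ) : ℚ) = k * m := by
      rw [← hm]
      generalize e - mukaiForm e v • w = q
      simp only [mukaiForm, mukaiFormQ]
      push_cast
      simp only [hyk]
      ring
    have h3 : mukaiForm y (e - mukaiForm e v • w) = k * m := by exact_mod_cast h2
    rw [mf_sub_right, mf_smul_right, hey, mf_comm e v, hev] at h3
    linarith
  choose u hu using key
  have hyu : y = k • u + mukaiForm y w • v := by
    funext i
    have := hu i
    simp only [Pi.add_apply, Pi.smul_apply, smul_eq_mul]
    linarith
  refine ⟨gt u - ε • u, ?_, ?_⟩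
  · rw [mem_perpV, mf_sub_left, mf_smul_left]
    have h := hgt u v
    rw [hv, mf_smul_right] at h
    linear_combination (-mukaiForm (gt u) v) * hε + ε * h
  · rw [← hext]
    change gt y - ε • y = _
    generalize mukaiForm y w = s at hyu
    subst hyu
    rw [map_add, map_smul, map_smul, hv]
    module

theorem backward_dir (v w : Fin 8 → ℤ) (hw : mukaiForm w v = 1) (hd : mukaiForm v v ≠ 0)
    (g : perpV v ≃ₗ[ℤ] perpV v)
    (hg : ∀ x y : perpV v, mukaiForm (g x).1 (g y).1 = mukaiForm x.1 y.1)
    (ε : ℤ) (hε : ε = 1 ∨ ε = -1)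
    (H : ∀ x : Fin 8 → ℚ,
          mukaiFormQ x (fun i => (v i : ℚ)) = 0 →
          (∀ y ∈ perpV v, ∃ m : ℤ, mukaiFormQ x (fun i => (y i : ℚ)) = (m : ℚ)) →
          ∀ (k : ℤ) (y : Fin 8 → ℤ) (hy : y ∈ perpV v),
            (fun i => ((y i : ℚ))) = k • x →
            ∃ z ∈ perpV v, (g ⟨y, hy⟩).1 - ε • y = k • z) :
    ∃ gt : (Fin 8 → ℤ) ≃ₗ[ℤ] (Fin 8 → ℤ),
        (∀ x y, mukaiForm (gt x) (gt y) = mukaiForm x y) ∧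
        ∀ x : perpV v, gt x.1 = (g x).1 := by
  have hεε : ε * ε = 1 := mul_self_eq_one_iff.mpr hε
  obtain ⟨d, hdd⟩ : ∃ d, d = mukaiForm v v := ⟨_, rfl⟩
  rw [← hdd] at hd
  have hdQ : (d : ℚ) ≠ 0 := by exact_mod_cast hd
  have hvw : mukaiForm v w = 1 := by rw [mf_comm, hw]
  have hyp : d • w - v ∈ perpV v := by
    rw [mem_perpV, mf_sub_left, mf_smul_left, hw, ← hdd]; ring
  have hpair : ∀ y : Fin 8 → ℤ,
      (d : ℚ) * mukaiFormQ (fun i => (w i : ℚ) - (v i : ℚ) / d) (fun i => (y i : ℚ))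
        = ((mukaiForm (d • w - v) y : ℤ) : ℚ) := by
    intro y
    simp only [mukaiForm, mukaiFormQ, Pi.sub_apply, Pi.smul_apply, smul_eq_mul]
    push_cast
    field_simp
  obtain ⟨z, hz, hgz⟩ := H (fun i => (w i : ℚ) - (v i : ℚ) / d)
    (by
      have := hpair v
      rw [(mem_perpV _ _).mp hyp] at this
      simpa [hd] using this)
    (by
      intro y hy
      refine ⟨mukaiForm w y, ?_⟩
      apply mul_left_cancel₀ hdQ
      rw [hpair, mf_sub_left, mf_smul_left, mf_comm v y, (mem_perpV _ _).mp hy]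
      push_cast; ring)
    d (d • w - v) hyp
    (by
      funext i
      simp
      field_simp)
  obtain ⟨W, hW⟩ : ∃ W, W = ε • w + z := ⟨_, rfl⟩
  have hdW : d • W = (g ⟨d • w - v, hyp⟩).1 + ε • v := by
    rw [hW, smul_add, ← hgz]; module
  have hgv : ∀ x : perpV v, mukaiForm (g x).1 v = 0 := fun x => (g x).2
  have hgv' : ∀ x : perpV v, mukaiForm v (g x).1 = 0 := fun x => by rw [mf_comm, hgv]
  have hWv : mukaiForm W v = ε := by
    rw [hW, mf_add_left, mf_smul_left, hw, (mem_perpV _ _).mp hz]; ring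
  have hgW : ∀ x : perpV v, mukaiForm (g x).1 W = mukaiForm x.1 w := by
    intro x
    apply mul_left_cancel₀ hd
    rw [← mf_smul_right, hdW, mf_add_right, mf_smul_right, hgv, hg]
    change mukaiForm x.1 (d • w - v) + _ = _
    rw [mf_sub_right, mf_smul_right, (mem_perpV _ _).mp x.2]; ring
  have hWW : mukaiForm W W = mukaiForm w w := by
    apply mul_left_cancel₀ hd
    rw [← mf_smul_left, hdW, mf_add_left, mf_smul_left, hgW, mf_comm v W, hWv]
    change mukaiForm (d • w - v) w + _ = _
    rw [mf_sub_left, mf_smul_left, hvw, hεε]; ring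
  have hP : ∀ x : Fin 8 → ℤ, x - mukaiForm x v • w ∈ perpV v := by
    intro x
    rw [mem_perpV, mf_sub_left, mf_smul_left, hw]; ring
  let P : (Fin 8 → ℤ) →ₗ[ℤ] perpV v :=
    { toFun := fun x => ⟨x - mukaiForm x v • w, hP x⟩
      map_add' := by
        intro x y
        apply Subtype.ext
        change _ - _ = (_ - _) + (_ - _)
        rw [mf_add_left]; module
      map_smul' := by
        intro c x
        apply Subtype.ext
        change _ - _ = c • (_ - _)
        rw [mf_smul_left]; module }
  have hPv : ∀ x, (P x).1 = x - mukaiForm x v • w := fun x => rfl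
  let T : (Fin 8 → ℤ) →ₗ[ℤ] (Fin 8 → ℤ) :=
    { toFun := fun x => (g (P x)).1 + mukaiForm x v • W
      map_add' := by
        intro x y
        rw [map_add, map_add, mf_add_left, Submodule.coe_add]; module
      map_smul' := by
        intro c x
        rw [map_smul, map_smul, mf_smul_left, Submodule.coe_smul, RingHom.id_apply]; module }
  have hT : ∀ x, T x = (g (P x)).1 + mukaiForm x v • W := fun x => rfl
  have hiso : ∀ x y, mukaiForm (T x) (T y) = mukaiForm x y := by
    intro x y
    simp only [hT, mf_add_left, mf_add_right, mf_smul_left, mf_smul_right, hg, hgW, hWW,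
      mf_comm W (g _).1, hPv, mf_sub_left, mf_sub_right, mf_comm w y]
    ring
  have hTg : ∀ x : perpV v, T x.1 = (g x).1 := by
    intro x
    have hx0 := (mem_perpV _ _).mp x.2
    have : P x.1 = x := by
      apply Subtype.ext
      rw [hPv, hx0]; module
    rw [hT, this, hx0]; module
  have hTw : T w = W := by
    have : P w = 0 := by
      apply Subtype.ext
      rw [hPv, hw, one_smul, sub_self]; rfl
    rw [hT, this, hw, map_zero, one_smul]; simp
  have hinj : Function.Injective T := by
    rw [injective_iff_map_eq_zero]
    intro x hx
    apply mf_nondeg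
    intro y
    rw [← hiso, hx]
    simp [mukaiForm]
  have hsurj : Function.Surjective T := by
    intro x
    have hm : x - (ε * mukaiForm x v) • W ∈ perpV v := by
      rw [mem_perpV, mf_sub_left, mf_smul_left, hWv]
      linear_combination (-mukaiForm x v) * hεε
    refine ⟨(g.symm ⟨_, hm⟩).1 + (ε * mukaiForm x v) • w, ?_⟩
    rw [map_add, map_smul, hTw, hTg, LinearEquiv.apply_symm_apply]
    module
  exact ⟨LinearEquiv.ofBijective T ⟨hinj, hsurj⟩, hiso, hTg⟩

/-- Let `v` be primitive in the Mukai lattice with `(v,v) = 2n+2`, `Λ = v^⊥`, and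
`g` an isometry of `Λ`. Then `g` extends to an isometry of the Mukai lattice if
and only if `g` acts as `+1` or `-1` on the discriminant group `Λ^∨/Λ`, i.e.
there is `ε ∈ {1,-1}` with `g_ℚ(x) - ε·x ∈ Λ` for every `x` in the dual lattice
`Λ^∨ ⊆ Λ ⊗ ℚ`.  Here the dual lattice is realized inside `v^⊥ ⊆ ℚ⁸` as the set
of `x` pairing integrally with `Λ`, and the condition `g_ℚ(x) - ε·x ∈ Λ` is
expressed by clearing denominators: whenever `k • x` equals an integral vector
`y ∈ Λ`, one has `g(y) - ε·y ∈ k • Λ`. -/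
theorem stmt10 (n : ℕ) (hn : 1 ≤ n) (v : Fin 8 → ℤ)
    (hvprim : IsPrimitive v) (hvv : mukaiForm v v = 2 * (n : ℤ) + 2)
    (g : perpV v ≃ₗ[ℤ] perpV v)
    (hg : ∀ x y : perpV v, mukaiForm (g x).1 (g y).1 = mukaiForm x.1 y.1) :
    (∃ gt : (Fin 8 → ℤ) ≃ₗ[ℤ] (Fin 8 → ℤ),
        (∀ x y, mukaiForm (gt x) (gt y) = mukaiForm x y) ∧
        ∀ x : perpV v, gt x.1 = (g x).1) ↔
      (∃ ε : ℤ, (ε = 1 ∨ ε = -1) ∧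
        ∀ x : Fin 8 → ℚ,
          mukaiFormQ x (fun i => (v i : ℚ)) = 0 →
          (∀ y ∈ perpV v, ∃ m : ℤ, mukaiFormQ x (fun i => (y i : ℚ)) = (m : ℚ)) →
          ∀ (k : ℤ) (y : Fin 8 → ℤ) (hy : y ∈ perpV v),
            (fun i => ((y i : ℚ))) = k • x →
            ∃ z ∈ perpV v, (g ⟨y, hy⟩).1 - ε • y = k • z) := by
  obtain ⟨w, hw⟩ := exists_dual v hvprim
  have hd : mukaiForm v v ≠ 0 := by rw [hvv]; omega
  constructor
  · rintro ⟨gt, hgt, hext⟩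
    exact forward_dir v w hw hd g gt hgt hext
  · rintro ⟨ε, hε, H⟩
    exact backward_dir v w hw hd g hg ε hε H
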